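/- The CM value of the hauptmodul of the Fricke group Γ₀*(6) at the point (2 + √-2)/6 equals -10: j₆*((2 + i√2)/6) = -10. Consequently, since the CM point (2+i√2)/6 is the root α_Q of the quadratic form Q = [6,-4,1] of discriminant -8, whose class 𝒬_{8,6}/Γ₀*(6) is a single orbit with |Γ̄₀*(6)_Q| = 2, and φ₂(j₆*) = (j₆*)² - 158, one has t₂^{(6*)}(8) = ((-10)² - 158)/2 = -29. -/

import Mathlib

open Complex Matrix

noncomputable section

/-- `SL(2, ℝ)`. -/
abbrev SL2R := Matrix.SpecialLinearGroup (Fin 2) ℝ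

/-- `q = e^{2πiz}` (also used as `ζ = e^{2πiz}`). -/
def qc (z : ℂ) : ℂ := Complex.exp (2 * Real.pi * Complex.I * z)

/-- The Dedekind eta function `η(z) = q^{1/24} ∏_{n ≥ 1} (1 - q^n)` (intended for `Im z > 0`). -/
def dedekindEta (z : ℂ) : ℂ :=
  Complex.exp (Real.pi * Complex.I * z / 12) *
    ∏' n : ℕ, (1 - Complex.exp (2 * Real.pi * Complex.I * ((n : ℂ) + 1) * z))

/-- The hauptmodul `j_N` of `Γ₀(N)` for `N ∈ {2, 3, 5, 7, 13, 6, 10}`. -/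
def jn (N : ℕ) (z : ℂ) : ℂ :=
  if N = 6 then (dedekindEta (2 * z) * dedekindEta (3 * z) ^ 3 / (dedekindEta z * dedekindEta (6 * z) ^ 3)) ^ 3 - 3
  else if N = 10 then dedekindEta (2 * z) * dedekindEta (5 * z) ^ 5 / (dedekindEta z * dedekindEta (10 * z) ^ 5) - 1
  else (dedekindEta z / dedekindEta ((N : ℂ) * z)) ^ (24 / (N - 1)) + 24 / ((N : ℂ) - 1)

/-- The hauptmodul `j_N^*` of the Fricke group `Γ₀^*(N)` for `N ∈ {2, 3, 5, 7, 13, 6, 10}`. -/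
def jnStar (N : ℕ) (z : ℂ) : ℂ :=
  if N = 6 then
    (dedekindEta z * dedekindEta (3 * z) / (dedekindEta (2 * z) * dedekindEta (6 * z))) ^ 6 + 6 +
      2 ^ 6 * (dedekindEta (2 * z) * dedekindEta (6 * z) / (dedekindEta z * dedekindEta (3 * z))) ^ 6
  else if N = 10 then
    (dedekindEta z * dedekindEta (5 * z) / (dedekindEta (2 * z) * dedekindEta (10 * z))) ^ 4 + 4 +
      2 ^ 4 * (dedekindEta (2 * z) * dedekindEta (10 * z) / (dedekindEta z * dedekindEta (5 * z))) ^ 4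
  else
    (dedekindEta z / dedekindEta ((N : ℂ) * z)) ^ (24 / (N - 1)) + 24 / ((N : ℂ) - 1) +
      (N : ℂ) ^ (12 / (N - 1)) * (dedekindEta ((N : ℂ) * z) / dedekindEta z) ^ (24 / (N - 1))

/-- `f` has the `q`-expansion `f(τ) = Σ_{n ≥ n₀} (a n) q^n` on the upper half-plane. -/
def HasQExp (f : ℂ → ℂ) (a : ℤ → ℂ) (n₀ : ℤ) : Prop :=
  (∀ n < n₀, a n = 0) ∧
    ∀ τ : ℂ, 0 < τ.im →
      HasSum (fun m : ℕ => a (n₀ + m) * qc τ ^ (n₀ + (m : ℤ))) (f τ)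

/-- `Γ₀(N)` viewed as a subgroup of `SL(2, ℝ)`. -/
def Gamma0SL2R (N : ℕ) : Subgroup SL2R :=
  (CongruenceSubgroup.Gamma0 N).map
    (Matrix.SpecialLinearGroup.map (Int.castRingHom ℝ))

/-- The set of Atkin–Lehner matrices `W_e` of level `N`:
`W_e = e^{-1/2} [[xe, y], [zN, we]]`, `x, y, z, w ∈ ℤ` (determinant `1` being automatic). -/
def atkinLehnerSet (N e : ℕ) : Set SL2R :=
  { g | ∃ x y z w : ℤ,
      g.1 = (Real.sqrt e)⁻¹ • !![(x : ℝ) * e, (y : ℝ); (z : ℝ) * N, (w : ℝ) * e] }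

/-- The Fricke group `Γ₀^*(N)`, generated by `Γ₀(N)` and all Atkin–Lehner involutions `W_e`
for `e ∣ N` with `gcd(e, N/e) = 1`. -/
def FrickeGroup (N : ℕ) : Subgroup SL2R :=
  Subgroup.closure
    ((Gamma0SL2R N : Set SL2R) ∪
      ⋃ e ∈ {e : ℕ | e ∣ N ∧ Nat.Coprime e (N / e)}, atkinLehnerSet N e)

/-- The Gram matrix of the integral binary quadratic form `[a, b, c]`. -/
def formMat (a b c : ℤ) : Matrix (Fin 2) (Fin 2) ℝ :=
  !![(a : ℝ), (b : ℝ) / 2; (b : ℝ) / 2, (c : ℝ)]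

/-- `𝒬_{d,N}`: positive definite integral binary quadratic forms `[a, b, c]` of
discriminant `-d` with `N ∣ a`. -/
def QdN (d : ℤ) (N : ℕ) : Set (Matrix (Fin 2) (Fin 2) ℝ) :=
  { M | ∃ a b c : ℤ, M = formMat a b c ∧ 0 < a ∧ b ^ 2 - 4 * a * c = -d ∧ (N : ℤ) ∣ a }

/-- `𝒬_{d,N,h}`: members of `𝒬_{d,N}` with `b ≡ h (mod 2N)`. -/
def QdNh (d : ℤ) (N : ℕ) (h : ℤ) : Set (Matrix (Fin 2) (Fin 2) ℝ) :=
  { M | ∃ a b c : ℤ, M = formMat a b c ∧ 0 < a ∧ b ^ 2 - 4 * a * c = -d ∧ (N : ℤ) ∣ a ∧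
      (b : ZMod (2 * N)) = (h : ZMod (2 * N)) }

/-- Orbit relation of the (right) action `Q ↦ Q ∘ g`, i.e. `M ↦ gᵀ M g`, of `Γ ≤ SL(2, ℝ)`
on a set `S` of Gram matrices of quadratic forms. -/
def formRel (Γ : Subgroup SL2R) (S : Set (Matrix (Fin 2) (Fin 2) ℝ)) (Q Q' : S) : Prop :=
  ∃ g ∈ Γ, Q'.1 = (g.1)ᵀ * Q.1 * g.1

/-- The CM point `α_Q` of a positive definite form (as a point of `ℂ`; it lies in the upper
half-plane): `α_Q = (-b + i √d) / (2a) = (-(b/2) + i √(det M)) / a`. -/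
def cmPointC (M : Matrix (Fin 2) (Fin 2) ℝ) : ℂ :=
  ((-(M 0 1) : ℝ) + Complex.I * Real.sqrt M.det) / ((M 0 0 : ℝ) : ℂ)

/-- The order of the stabilizer of the form `M` in `Γ/{±1}` (the stabilizer in `Γ` contains
`±1` and has twice the cardinality). -/
def stabOrder (Γ : Subgroup SL2R) (M : Matrix (Fin 2) (Fin 2) ℝ) : ℕ :=
  Nat.card { g : SL2R // g ∈ Γ ∧ (g.1)ᵀ * M * g.1 = M } / 2

/-- The modular trace `Σ_{Q ∈ S/Γ} f(α_Q) / |Γ̄_Q|`. -/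
def classTrace (Γ : Subgroup SL2R) (f : ℂ → ℂ)
    (S : Set (Matrix (Fin 2) (Fin 2) ℝ)) : ℂ :=
  ∑ᶠ O : Quot (formRel Γ S),
    f (cmPointC (Quot.out O).1) / (stabOrder Γ (Quot.out O).1 : ℂ)

/-- `t₂^{(N*)}(d)`, where `P` is the polynomial with `φ₂(j_N^*) = P(j_N^*)`;
includes the paper's conventions at nonpositive indices. -/
def t2Star (N : ℕ) (P : Polynomial ℂ) (d : ℤ) : ℂ :=
  if 0 < d then
    classTrace (FrickeGroup N) (fun z => Polynomial.eval (jnStar N z) P) (QdN d N)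
  else if d = 0 then (if N = 2 then 5 else if N = 6 ∨ N = 10 then 5 / 2 else 3)
  else if d = -1 then -1
  else if d = -4 then -2
  else 0

/-- `σ₁^{(N)}(x) = Σ_{d ∣ x, N ∤ d} d` for `x ∈ ℤ_{>0}`, `(N-1)/24` at `x = 0`, and `0`
off `ℤ_{≥0}`. -/
def sigmaN (N : ℕ) (x : ℚ) : ℂ :=
  if x = 0 then ((N : ℂ) - 1) / 24
  else if 0 < x ∧ x.den = 1 then
    ∑ d ∈ (Nat.divisors x.num.toNat).filter (fun d => ¬ N ∣ d), (d : ℂ)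
  else 0

/-- `σ₁(x) = Σ_{d ∣ x} d` for `x ∈ ℤ_{>0}` and `0` otherwise. -/
def sigmaQ (x : ℚ) : ℂ :=
  if 0 < x ∧ x.den = 1 then ∑ d ∈ Nat.divisors x.num.toNat, (d : ℂ) else 0

/-- A weakly holomorphic Jacobi form of weight `k` and index `m`. -/
structure WeakJacobiForm (k : ℤ) (m : ℕ) where
  toFun : ℂ → ℂ → ℂ
  holo : DifferentiableOn ℂ (fun p : ℂ × ℂ => toFun p.1 p.2)
      ({τ : ℂ | 0 < τ.im} ×ˢ (Set.univ : Set ℂ))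
  slash_inv : ∀ a b c d : ℤ, a * d - b * c = 1 → ∀ τ z : ℂ, 0 < τ.im →
    ((c : ℂ) * τ + d) ^ (-k) *
        Complex.exp (-(2 * Real.pi * Complex.I * m * c * z ^ 2) / ((c : ℂ) * τ + d)) *
        toFun (((a : ℂ) * τ + b) / ((c : ℂ) * τ + d)) (z / ((c : ℂ) * τ + d)) =
      toFun τ z
  elliptic : ∀ lm mu : ℤ, ∀ τ z : ℂ, 0 < τ.im →
    Complex.exp (2 * Real.pi * Complex.I * m * ((lm : ℂ) ^ 2 * τ + 2 * lm * z)) *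
        toFun τ (z + lm * τ + mu) = toFun τ z
  coeff : ℤ → ℤ → ℂ
  coeff_neg_finite : {n : ℤ | n < 0 ∧ ∃ r : ℤ, coeff n r ≠ 0}.Finite
  expansion : ∀ τ z : ℂ, 0 < τ.im →
    HasSum (fun p : ℤ × ℤ => coeff p.1 p.2 * qc τ ^ p.1 * qc z ^ p.2) (toFun τ z)

/-- Meromorphy of weight `k` at all cusps: at each cusp `γ∞`, the function `F|_k γ` has a
Fourier expansion in fractional powers of `q` with only finitely many negative terms. -/
def MeromAtCusps (k : ℤ) (F : ℂ → ℂ) : Prop :=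
  ∀ a b c d : ℤ, a * d - b * c = 1 →
    ∃ (M : ℕ) (cs : ℤ → ℂ) (n₀ : ℤ), 0 < M ∧
      ∀ τ : ℂ, 0 < τ.im →
        HasSum
          (fun j : ℕ => cs (n₀ + j) *
            Complex.exp (2 * Real.pi * Complex.I * τ / M) ^ (n₀ + (j : ℤ)))
          (((c : ℂ) * τ + d) ^ (-k) * F (((a : ℂ) * τ + b) / ((c : ℂ) * τ + d)))

/-- The Möbius action of an element of `SL(2, ℝ)` on `ℂ`. -/
def moebius (g : SL2R) (z : ℂ) : ℂ :=
  ((g.1 0 0 : ℝ) * z + ((g.1 0 1 : ℝ) : ℂ)) / ((g.1 1 0 : ℝ) * z + ((g.1 1 1 : ℝ) : ℂ))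

/-- A weakly holomorphic modular function on `Γ`: holomorphic on the upper half-plane,
`Γ`-invariant, with poles only at the cusps. -/
def IsWeaklyHolModularFn (Γ : Subgroup SL2R) (f : ℂ → ℂ) : Prop :=
  DifferentiableOn ℂ f {z : ℂ | 0 < z.im} ∧
    (∀ g ∈ Γ, ∀ z : ℂ, 0 < z.im → f (moebius g z) = f z) ∧
    MeromAtCusps 0 f

/-- The set `L_{h, d/4N}` of vectors
`X = [[b + h/2N, c/N], [-a, -(b + h/2N)]]`, `a, b, c ∈ ℤ`, of norm `q(X) = d/4N`. -/
def LhSet (N : ℕ) (h d : ℤ) : Set (Matrix (Fin 2) (Fin 2) ℝ) :=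
  { X | ∃ a b c : ℤ,
      X = !![(b : ℝ) + (h : ℝ) / (2 * N), (c : ℝ) / N;
             -(a : ℝ), -((b : ℝ) + (h : ℝ) / (2 * N))] ∧
      (2 * b * N + h) ^ 2 - 4 * a * c * N = -d }

/-- The map `X ↦ N ⬝ [[0,-1],[1,0]] ⬝ X` from vectors to Gram matrices of quadratic forms. -/
def vecToForm (N : ℕ) (X : Matrix (Fin 2) (Fin 2) ℝ) : Matrix (Fin 2) (Fin 2) ℝ :=
  (N : ℝ) • (!![(0 : ℝ), -1; 1, 0] * X)

/-- Orbit relation of `Γ` acting by conjugation `g.X = g X g⁻¹` on a set `S` of vectors. -/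
def vecRel (Γ : Subgroup SL2R) (S : Set (Matrix (Fin 2) (Fin 2) ℝ)) (X X' : S) : Prop :=
  ∃ g ∈ Γ, X'.1 = g.1 * X.1 * (g⁻¹).1

/-- The Heegner point `D_X ∈ ℍ` of a vector `X` of positive norm. -/
def heegnerC (X : Matrix (Fin 2) (Fin 2) ℝ) : ℂ :=
  ((X 0 0 / X 1 0 : ℝ) : ℂ) + Complex.I * Real.sqrt (X.det / (X 1 0) ^ 2)

/-- The order of the stabilizer of the vector `X` in `Γ/{±1}`. -/
def vecStabOrder (Γ : Subgroup SL2R) (X : Matrix (Fin 2) (Fin 2) ℝ) : ℕ :=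
  Nat.card { g : SL2R // g ∈ Γ ∧ g.1 * X * (g⁻¹).1 = X } / 2

/-- The modular trace `t_f(h, m) = Σ_{X ∈ Γ\L_{h,m}} f(D_X) / |Γ̄_X|`. -/
def vecTrace (Γ : Subgroup SL2R) (f : ℂ → ℂ) (S : Set (Matrix (Fin 2) (Fin 2) ℝ)) : ℂ :=
  ∑ᶠ O : Quot (vecRel Γ S), f (heegnerC (Quot.out O).1) / (vecStabOrder Γ (Quot.out O).1 : ℂ)

/-- The weight-2 Eisenstein series `E₂(z) = 1 - 24 Σ_{n ≥ 1} σ₁(n) qⁿ`. -/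
def E2 (z : ℂ) : ℂ :=
  1 - 24 * ∑' n : ℕ, (∑ d ∈ Nat.divisors (n + 1), (d : ℂ)) * qc z ^ (n + 1)

/-- `E₂^{(N)}(z) = N E₂(Nz) - E₂(z)`. -/
def E2N (N : ℕ) (z : ℂ) : ℂ := (N : ℂ) * E2 ((N : ℂ) * z) - E2 z

end

theorem dedekindEta_eq_eta (z : ℂ) : dedekindEta z = ModularForm.eta z := by
  simp only [dedekindEta, ModularForm.eta, ModularForm.eta_q_eq_cexp]
  congr 2
  push_cast
  ring

theorem dedekindEta_ne_zero {z : ℂ} (hz : 0 < z.im) : dedekindEta z ≠ 0 :=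
  dedekindEta_eq_eta z ▸ ModularForm.eta_ne_zero hz

theorem dedekindEta_pow_six_add_one (z : ℂ) :
    dedekindEta (z + 1) ^ 6 = I * dedekindEta z ^ 6 := by
  have hq (n : ℕ) : Complex.exp (2 * Real.pi * I * ((n : ℂ) + 1) * (z + 1)) =
      Complex.exp (2 * Real.pi * I * ((n : ℂ) + 1) * z) := by
    rw [Complex.exp_eq_exp_iff_exists_int]
    exact ⟨n + 1, by push_cast; ring⟩
  have hI : Complex.exp (Real.pi * I / 12) ^ 6 = I := by
    rw [← Complex.exp_nat_mul]
    refine Eq.trans ?_ Complex.exp_pi_div_two_mul_I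
    congr 1
    push_cast
    ring
  have hadd : Complex.exp (Real.pi * I * (z + 1) / 12) =
      Complex.exp (Real.pi * I / 12) * Complex.exp (Real.pi * I * z / 12) := by
    rw [← Complex.exp_add]
    congr 1
    ring
  simp only [dedekindEta, hq, hadd, mul_pow, hI]
  ring

theorem dedekindEta_pow_six_neg_one_div {z : ℂ} (hz : 0 < z.im) :
    dedekindEta (-1 / z) ^ 6 = I * z ^ 3 * dedekindEta z ^ 6 := by
  have hz0 : z ≠ 0 := by
    rintro rfl
    simp at hz
  have hsqrt {w : ℂ} (hw : w ≠ 0) : Complex.sqrt w ^ 6 = w ^ 3 := by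
    rw [sqrt_eq_exp hw, ← Complex.exp_nat_mul]
    conv_rhs => rw [← Complex.exp_log hw, ← Complex.exp_nat_mul]
    congr 1
    push_cast
    ring
  have h : ModularForm.eta (-1 / z) =
      (Complex.sqrt I)⁻¹ * (Complex.sqrt z * ModularForm.eta z) := by
    simpa using ModularForm.eta_comp_eq_csqrt_I_inv hz
  rw [dedekindEta_eq_eta, dedekindEta_eq_eta, h]
  simp only [mul_pow, inv_pow, hsqrt hz0, hsqrt I_ne_zero, I_pow_three, inv_neg, inv_I]
  ring

/-- The eta quotient `(η(z)η(3z) / (η(2z)η(6z)))⁶`. -/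
noncomputable def etaQuot (z : ℂ) : ℂ :=
  (dedekindEta z * dedekindEta (3 * z) / (dedekindEta (2 * z) * dedekindEta (6 * z))) ^ 6

theorem jnStar_six (z : ℂ) : jnStar 6 z = etaQuot z + 6 + 64 / etaQuot z := by
  simp only [jnStar, etaQuot, if_true]
  rw [← inv_div (dedekindEta z * dedekindEta (3 * z)), inv_pow, div_eq_mul_inv (64 : ℂ)]
  norm_num

theorem ne_zero_of_im_pos {z : ℂ} (hz : 0 < z.im) : z ≠ 0 := by
  rintro rfl
  simp at hz

theorem im_nat_mul_pos {z : ℂ} (hz : 0 < z.im) {n : ℕ} (hn : 0 < n) : 0 < ((n : ℂ) * z).im := by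
  simpa [hn] using hz

theorem im_neg_one_div_pos {z : ℂ} (hz : 0 < z.im) : 0 < (-1 / z).im := by
  rw [neg_div, one_div, neg_im, inv_im, neg_div, neg_neg]
  exact div_pos hz (normSq_pos.mpr (ne_zero_of_im_pos hz))

theorem etaQuot_ne_zero {z : ℂ} (hz : 0 < z.im) : etaQuot z ≠ 0 :=
  pow_ne_zero _ <| div_ne_zero
    (mul_ne_zero (dedekindEta_ne_zero hz) (dedekindEta_ne_zero (im_nat_mul_pos hz three_pos)))
    (mul_ne_zero (dedekindEta_ne_zero (im_nat_mul_pos hz two_pos))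
      (dedekindEta_ne_zero (im_nat_mul_pos hz (n := 6) (by norm_num))))

theorem etaQuot_eq (z : ℂ) : etaQuot z = dedekindEta z ^ 6 * dedekindEta (3 * z) ^ 6 /
    (dedekindEta (2 * z) ^ 6 * dedekindEta (6 * z) ^ 6) := by
  rw [etaQuot, div_pow, mul_pow, mul_pow]

theorem dedekindEta_pow_six_add_two (z : ℂ) :
    dedekindEta (z + 2) ^ 6 = -dedekindEta z ^ 6 := by
  rw [show z + 2 = z + 1 + 1 by ring, dedekindEta_pow_six_add_one, dedekindEta_pow_six_add_one]
  linear_combination dedekindEta z ^ 6 * I_sq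

theorem dedekindEta_pow_six_add_three (z : ℂ) :
    dedekindEta (z + 3) ^ 6 = -I * dedekindEta z ^ 6 := by
  rw [show z + 3 = z + 1 + 2 by ring, dedekindEta_pow_six_add_two, dedekindEta_pow_six_add_one]
  ring

theorem dedekindEta_pow_six_add_six (z : ℂ) :
    dedekindEta (z + 6) ^ 6 = -dedekindEta z ^ 6 := by
  rw [show z + 6 = z + 3 + 3 by ring, dedekindEta_pow_six_add_three,
    dedekindEta_pow_six_add_three]
  linear_combination dedekindEta z ^ 6 * I_sq

theorem etaQuot_add_one (z : ℂ) : etaQuot (z + 1) = etaQuot z := by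
  simp only [etaQuot_eq, mul_add, mul_one, dedekindEta_pow_six_add_one,
    dedekindEta_pow_six_add_two, dedekindEta_pow_six_add_three, dedekindEta_pow_six_add_six]
  rw [neg_mul_neg]
  congr 1
  linear_combination -dedekindEta z ^ 6 * dedekindEta (3 * z) ^ 6 * I_sq

theorem etaQuot_neg_one_div {z : ℂ} (hz : 0 < z.im) :
    etaQuot (-1 / (6 * z)) = 64 / etaQuot z := by
  have hz0 := ne_zero_of_im_pos hz
  have i2 : 0 < (2 * z).im := im_nat_mul_pos hz two_pos
  have i3 : 0 < (3 * z).im := im_nat_mul_pos hz three_pos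
  have i6 : 0 < (6 * z).im := im_nat_mul_pos hz (n := 6) (by norm_num)
  have h1 := dedekindEta_ne_zero hz
  have h2 := dedekindEta_ne_zero i2
  have h3 := dedekindEta_ne_zero i3
  have h6 := dedekindEta_ne_zero i6
  rw [etaQuot_eq, etaQuot_eq,
    show 3 * (-1 / (6 * z)) = -1 / (2 * z) by field_simp; norm_num,
    show 2 * (-1 / (6 * z)) = -1 / (3 * z) by field_simp; norm_num,
    show 6 * (-1 / (6 * z)) = -1 / z by field_simp,
    dedekindEta_pow_six_neg_one_div hz, dedekindEta_pow_six_neg_one_div i2,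
    dedekindEta_pow_six_neg_one_div i3, dedekindEta_pow_six_neg_one_div i6]
  have := I_ne_zero
  generalize dedekindEta (2 * z) = x2 at *
  generalize dedekindEta (3 * z) = x3 at *
  generalize dedekindEta (6 * z) = x6 at *
  field_simp
  norm_num

theorem two_mul_add_one_ne_zero {z : ℂ} (hz : 0 < z.im) : 2 * z + 1 ≠ 0 := by
  intro h
  have := congrArg Complex.im h
  simp at this
  linarith

/-- The sixth power of `η` transforms under `z ↦ z / (2z + 1)` with automorphy factor
`-(2z + 1)³`. -/
theorem dedekindEta_pow_six_div_two_mul_add_one {z : ℂ} (hz : 0 < z.im) :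
    dedekindEta (z / (2 * z + 1)) ^ 6 = -(2 * z + 1) ^ 3 * dedekindEta z ^ 6 := by
  have hz0 := ne_zero_of_im_pos hz
  have hd := two_mul_add_one_ne_zero hz
  have hv : 0 < (-1 / z - 2).im := by simpa using im_neg_one_div_pos hz
  have hT := dedekindEta_pow_six_add_two (-1 / z - 2)
  rw [sub_add_cancel, dedekindEta_pow_six_neg_one_div hz] at hT
  have hv_eq : -1 / z - 2 = -(2 * z + 1) / z := by
    field_simp
    ring
  rw [show z / (2 * z + 1) = -1 / (-1 / z - 2) by rw [hv_eq, div_div_eq_mul_div]; grind,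
    dedekindEta_pow_six_neg_one_div hv]
  have : (-1 / z - 2) ^ 3 * z ^ 3 = -(2 * z + 1) ^ 3 := by
    rw [hv_eq]
    field_simp
  linear_combination I * (-1 / z - 2) ^ 3 * hT - I ^ 2 * this * dedekindEta z ^ 6
    + (2 * z + 1) ^ 3 * dedekindEta z ^ 6 * I_sq

/-- Invariance of the eta quotient under an Atkin–Lehner involution `W₃`. -/
theorem etaQuot_atkinLehner_three {z : ℂ} (hz : 0 < z.im) :
    etaQuot ((3 * z + 1) / (6 * z + 3)) = etaQuot z := by
  have hd := two_mul_add_one_ne_zero hz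
  have hd6 : 6 * z + 3 ≠ 0 := fun h => hd (by linear_combination h / 3)
  have i2 : 0 < (2 * z).im := im_nat_mul_pos hz two_pos
  have i3 : 0 < (3 * z).im := im_nat_mul_pos hz three_pos
  have i6 : 0 < (6 * z).im := im_nat_mul_pos hz (n := 6) (by norm_num)
  have h2 := dedekindEta_ne_zero i2
  have h6 := dedekindEta_ne_zero i6
  have e1 : dedekindEta ((3 * z + 1) / (6 * z + 3)) ^ 6 =
      -I * (6 * z + 3) ^ 3 * dedekindEta (3 * z) ^ 6 := by
    have him : 0 < (3 * z + 1).im := by simpa using i3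
    rw [show 6 * z + 3 = 2 * (3 * z + 1) + 1 by ring,
      dedekindEta_pow_six_div_two_mul_add_one him, dedekindEta_pow_six_add_one]
    ring
  have e3 : dedekindEta (3 * ((3 * z + 1) / (6 * z + 3))) ^ 6 =
      -I * (2 * z + 1) ^ 3 * dedekindEta z ^ 6 := by
    rw [show 3 * ((3 * z + 1) / (6 * z + 3)) = z / (2 * z + 1) + 1 by grind,
      dedekindEta_pow_six_add_one, dedekindEta_pow_six_div_two_mul_add_one hz]
    ring
  have e2 : dedekindEta (2 * ((3 * z + 1) / (6 * z + 3))) ^ 6 =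
      I * (6 * z + 3) ^ 3 * dedekindEta (6 * z) ^ 6 := by
    have him : 0 < (6 * z + 3).im := by simpa using i6
    rw [show 2 * ((3 * z + 1) / (6 * z + 3)) = -1 / (6 * z + 3) + 1 by grind,
      dedekindEta_pow_six_add_one, dedekindEta_pow_six_neg_one_div him,
      dedekindEta_pow_six_add_three]
    linear_combination (-I) * (6 * z + 3) ^ 3 * dedekindEta (6 * z) ^ 6 * I_sq
  have e6 : dedekindEta (6 * ((3 * z + 1) / (6 * z + 3))) ^ 6 =
      I * (2 * z + 1) ^ 3 * dedekindEta (2 * z) ^ 6 := by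
    have him : 0 < (2 * z + 1).im := by simpa using i2
    rw [show 6 * ((3 * z + 1) / (6 * z + 3)) = -1 / (2 * z + 1) + 3 by grind,
      dedekindEta_pow_six_add_three, dedekindEta_pow_six_neg_one_div him,
      dedekindEta_pow_six_add_one]
    linear_combination (-I) * (2 * z + 1) ^ 3 * dedekindEta (2 * z) ^ 6 * I_sq
  rw [etaQuot_eq, etaQuot_eq, e1, e2, e3, e6]
  have := I_ne_zero
  generalize dedekindEta (2 * z) = x2 at *
  generalize dedekindEta (3 * z) = x3 at *
  generalize dedekindEta (6 * z) = x6 at *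
  generalize 6 * z + 3 = y at *
  generalize 2 * z + 1 = w at *
  field_simp

theorem norm_tprod_one_add_sub_one_le {f : ℕ → ℂ} (hf : Summable fun n ↦ ‖f n‖) :
    ‖∏' n, (1 + f n) - 1‖ ≤ Real.exp (∑' n, ‖f n‖) - 1 := by
  have ht := ((multipliable_one_add_of_summable hf).hasProd.sub_const 1).norm
  refine le_of_tendsto ht (Filter.Eventually.of_forall fun s ↦ ?_)
  refine (Finset.norm_prod_one_add_sub_one_le s f).trans ?_
  gcongr
  exact hf.sum_le_tsum s fun _ _ ↦ norm_nonneg _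

theorem summable_norm_pow_add {x : ℂ} (hx : ‖x‖ < 1) (k : ℕ) :
    Summable fun n : ℕ ↦ ‖x ^ (n + k)‖ := by
  simpa only [norm_pow] using
    (summable_nat_add_iff k).2 (summable_geometric_of_lt_one (norm_nonneg x) hx)

theorem norm_tprod_one_add_pow_sub_one_le {x : ℂ} (hx : ‖x‖ < 1) (k : ℕ) :
    ‖∏' n : ℕ, (1 + x ^ (n + k)) - 1‖ ≤ Real.exp (‖x‖ ^ k / (1 - ‖x‖)) - 1 := by
  convert norm_tprod_one_add_sub_one_le (summable_norm_pow_add hx k) using 3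
  simp_rw [norm_pow, pow_add, tsum_mul_right, tsum_geometric_of_lt_one (norm_nonneg x) hx]
  ring

theorem norm_qc (z : ℂ) : ‖qc z‖ = Real.exp (-(2 * Real.pi * z.im)) := by
  simp [qc, Complex.norm_exp]

theorem norm_qc_lt_one {z : ℂ} (hz : 0 < z.im) : ‖qc z‖ < 1 := by
  rw [norm_qc, Real.exp_lt_one_iff]
  have := Real.pi_pos
  nlinarith [mul_pos this hz]

theorem dedekindEta_eq_qc (z : ℂ) : dedekindEta z =
    Complex.exp (Real.pi * I * z / 12) * ∏' n : ℕ, (1 - qc z ^ (n + 1)) := by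
  unfold dedekindEta qc
  congr! 4 with n
  rw [← Complex.exp_nat_mul]
  push_cast
  ring_nf

theorem qc_nat_mul (m : ℕ) (z : ℂ) : qc (m * z) = qc z ^ m := by
  rw [qc, qc, ← Complex.exp_nat_mul]
  ring_nf

theorem dedekindEta_two_mul {z : ℂ} (hz : 0 < z.im) :
    dedekindEta (2 * z) = Complex.exp (Real.pi * I * z / 12) *
      (∏' n : ℕ, (1 + qc z ^ (n + 1))) * dedekindEta z := by
  have hq := summable_norm_pow_add (norm_qc_lt_one hz) 1
  have h1 := multipliable_one_add_of_summable hq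
  have h2 : Multipliable fun n : ℕ ↦ 1 - qc z ^ (n + 1) := by
    simpa only [sub_eq_add_neg] using
      multipliable_one_add_of_summable (f := fun n : ℕ ↦ -qc z ^ (n + 1)) (by simpa using hq)
  have hexp : Complex.exp (Real.pi * I * (2 * z) / 12) =
      Complex.exp (Real.pi * I * z / 12) * Complex.exp (Real.pi * I * z / 12) := by
    rw [← Complex.exp_add]
    ring_nf
  have hprod : ∏' n : ℕ, (1 - qc (2 * z) ^ (n + 1)) =
      (∏' n : ℕ, (1 + qc z ^ (n + 1))) * ∏' n : ℕ, (1 - qc z ^ (n + 1)) := by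
    rw [← h1.tprod_mul h2]
    congr! 2 with n
    rw [show (2 : ℂ) * z = (2 : ℕ) * z by simp, qc_nat_mul]
    ring
  rw [dedekindEta_eq_qc, dedekindEta_eq_qc z, hexp, hprod]
  ring

/-- The product expansion of the reciprocal of `etaQuot`. -/
theorem etaQuot_mul_qc {z : ℂ} (hz : 0 < z.im) :
    etaQuot z * (qc z * ((∏' n : ℕ, (1 + qc z ^ (n + 1))) *
      ∏' n : ℕ, (1 + (qc z ^ 3) ^ (n + 1))) ^ 6) = 1 := by
  have i3 : 0 < (3 * z).im := im_nat_mul_pos hz three_pos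
  have i2 : 0 < (2 * z).im := im_nat_mul_pos hz two_pos
  have i6 : 0 < (2 * (3 * z)).im := im_nat_mul_pos i3 two_pos
  have h1 := dedekindEta_ne_zero hz
  have h2 := dedekindEta_ne_zero i2
  have h3 := dedekindEta_ne_zero i3
  have h6 := dedekindEta_ne_zero i6
  have e2 := dedekindEta_two_mul hz
  have e6 := dedekindEta_two_mul i3
  rw [show (3 : ℂ) * z = (3 : ℕ) * z by simp, qc_nat_mul] at e6
  push_cast at e6
  have hq : qc z = (Complex.exp (Real.pi * I * z / 12) *
      Complex.exp (Real.pi * I * (3 * z) / 12)) ^ 6 := by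
    rw [← Complex.exp_add, ← Complex.exp_nat_mul, qc]
    push_cast
    ring_nf
  rw [etaQuot, show 6 * z = 2 * (3 * z) by ring]
  generalize ∏' n : ℕ, (1 + qc z ^ (n + 1)) = M₁ at e2 ⊢
  generalize ∏' n : ℕ, (1 + (qc z ^ 3) ^ (n + 1)) = M₃ at e6 ⊢
  rw [hq, ← mul_pow, ← mul_pow, div_mul_eq_mul_div, (div_eq_one_iff_eq (mul_ne_zero h2 h6)).2,
    one_pow]
  rw [e2, e6]
  ring

theorem exp_cm_bounds : Real.exp (-(2 * Real.pi * (√2 / 6))) ∈ Set.Icc (0.225 : ℝ) 0.229 := by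
  have h2l : (1.4142 : ℝ) ≤ √2 := Real.le_sqrt_of_sq_le (by norm_num)
  have h2u : √2 ≤ (1.4143 : ℝ) := Real.sqrt_le_iff.2 ⟨by norm_num, by norm_num⟩
  have hpl := Real.pi_gt_d4
  have hpu := Real.pi_lt_d4
  have hxl : 1 + 0.48 ≤ 2 * Real.pi * (√2 / 6) := by nlinarith
  have hxu : 2 * Real.pi * (√2 / 6) ≤ 1 + 0.4812 := by nlinarith
  have hel := Real.exp_one_gt_d9
  have heu := Real.exp_one_lt_d9
  have hl : (1.61 : ℝ) ≤ Real.exp 0.48 := by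
    have := Real.sum_le_exp_of_nonneg (x := 0.48) (by norm_num) 4
    norm_num [Finset.sum_range_succ, Nat.factorial] at this
    linarith
  have hu : Real.exp 0.4812 ≤ (1.63 : ℝ) := by
    have := Real.exp_bound' (x := 0.4812) (by norm_num) (by norm_num) (n := 4) (by norm_num)
    norm_num [Finset.sum_range_succ, Nat.factorial] at this
    norm_num at *
    linarith
  have hL := Real.exp_le_exp.2 hxl
  have hU := Real.exp_le_exp.2 hxu
  rw [Real.exp_add] at hL hU
  rw [Real.exp_neg]
  have hpos := Real.exp_pos (2 * Real.pi * (√2 / 6))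
  constructor
  · rw [le_inv_comm₀ (by norm_num) hpos]
    norm_num at *
    nlinarith
  · rw [inv_le_comm₀ hpos (by norm_num)]
    norm_num at *
    nlinarith

theorem norm_mul_pow_six_sub_one_le {u v : ℂ} {a b : ℝ} (hu : ‖u - 1‖ ≤ Real.exp a - 1)
    (hv : ‖v - 1‖ ≤ Real.exp b - 1) (hab : a + b ≤ 0.09) : ‖(u * v) ^ 6 - 1‖ ≤ 0.9 := by
  have hd : ‖u * v - 1‖ ≤ 0.1 := by
    have hexp : Real.exp (a + b) ≤ 1.1 := by
      have := Real.add_one_le_exp (-0.09 : ℝ)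
      rw [Real.exp_neg] at this
      have hpos := Real.exp_pos (0.09 : ℝ)
      have h2 : Real.exp (0.09 : ℝ) ≤ (-0.09 + 1)⁻¹ := by
        rwa [le_inv_comm₀ hpos (by norm_num)]
      exact (Real.exp_le_exp.2 hab).trans (h2.trans (by norm_num))
    have hu' : ‖u‖ ≤ Real.exp a := by
      have := norm_sub_norm_le u 1
      rw [norm_one] at this
      linarith
    calc ‖u * v - 1‖ = ‖u * (v - 1) + (u - 1)‖ := by ring_nf
      _ ≤ ‖u‖ * ‖v - 1‖ + ‖u - 1‖ := (norm_add_le _ _).trans (by rw [norm_mul])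
      _ ≤ Real.exp a * (Real.exp b - 1) + (Real.exp a - 1) := by gcongr
      _ = Real.exp (a + b) - 1 := by rw [Real.exp_add]; ring
      _ ≤ 0.1 := by norm_num at *; linarith
  have h6 := Finset.norm_prod_one_add_sub_one_le (Finset.range 6) fun _ ↦ u * v - 1
  simp only [add_sub_cancel, Finset.prod_const, Finset.card_range, Finset.sum_const,
    nsmul_eq_mul] at h6
  refine h6.trans ?_
  rw [Real.exp_nat_mul]
  have hexp : Real.exp ‖u * v - 1‖ ≤ 1 / 0.9 := by
    have := Real.add_one_le_exp (-‖u * v - 1‖)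
    rw [Real.exp_neg] at this
    rw [one_div, le_inv_comm₀ (Real.exp_pos _) (by norm_num)]
    norm_num at *
    linarith
  have := pow_le_pow_left₀ (Real.exp_pos _).le hexp 6
  norm_num at *
  linarith

theorem re_mul_neg_of_norm_sub_one_le {A B : ℂ} (hA : A.re < 0)
    (hA' : A.im ^ 2 ≤ 0.16 * A.re ^ 2) (hB : ‖B - 1‖ ≤ 0.9) : (A * B).re < 0 := by
  have hn : ‖A‖ ≤ 1.08 * -A.re := by
    rw [← abs_of_nonneg (norm_nonneg A)]
    refine abs_le_of_sq_le_sq ?_ (by linarith)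
    rw [← Complex.normSq_eq_norm_sq, Complex.normSq_apply]
    norm_num at *
    nlinarith
  have h1 : (A * B).re = A.re + (A * (B - 1)).re := by simp [mul_sub]
  have h2 : (A * (B - 1)).re ≤ ‖A‖ * ‖B - 1‖ := (Complex.re_le_norm _).trans_eq (norm_mul _ _)
  have h3 : ‖A‖ * ‖B - 1‖ ≤ 1.08 * -A.re * 0.9 :=
    mul_le_mul hn hB (norm_nonneg _) (by linarith)
  norm_num at *
  linarith

theorem mul_one_add_pow_six_bounds {r : ℝ} (hr : r ∈ Set.Icc (0.225 : ℝ) 0.229) {q : ℂ}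
    (hq : q = r * ((-1 + √3 * I) / 2)) :
    (q * (1 + q) ^ 6).re < 0 ∧
      (q * (1 + q) ^ 6).im ^ 2 ≤ 0.16 * (q * (1 + q) ^ 6).re ^ 2 := by
  obtain ⟨hl, hu⟩ := hr
  have hs : √3 ^ 2 = (3 : ℝ) := Real.sq_sqrt (by norm_num)
  have hW : ((√3 : ℝ) * I : ℂ) ^ 2 = -3 := by
    rw [mul_pow, I_sq, ← ofReal_pow, hs]
    norm_num
  obtain ⟨c, hc⟩ : ∃ c, c = (1 - r / 2) * ((1 - r / 2) ^ 2 - 9 * r ^ 2 / 4) := ⟨_, rfl⟩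
  obtain ⟨s, hs'⟩ : ∃ s, s = r / 2 * (3 * (1 - r / 2) ^ 2 - 3 * r ^ 2 / 4) := ⟨_, rfl⟩
  have hcube : (1 + q) ^ 3 = c + s * (√3 * I) := by
    rw [hq, hc, hs']
    push_cast
    linear_combination (3 * (1 - r / 2) * r ^ 2 / 4 + r ^ 3 / 8 * (√3 * I)) * hW
  have hA : q * (1 + q) ^ 6 =
      ((-(r * (c ^ 2 - 3 * s ^ 2 + 6 * c * s) / 2) : ℝ) : ℂ) +
        ((√3 * r * (c ^ 2 - 3 * s ^ 2 - 2 * c * s) / 2 : ℝ) : ℂ) * I := by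
    rw [show (1 + q) ^ 6 = ((1 + q) ^ 3) ^ 2 by ring, hcube, hq]
    push_cast
    linear_combination (r * (-1 + √3 * I) / 2 * s ^ 2 + r * c * s) * hW
  have hcl : 0.58 ≤ c := by rw [hc]; norm_num at *; nlinarith
  have hcu : c ≤ 0.6 := by rw [hc]; norm_num at *; nlinarith
  have hsl : 0.255 ≤ s := by rw [hs']; norm_num at *; nlinarith
  have hsu : s ≤ 0.27 := by rw [hs']; norm_num at *; nlinarith
  rw [hA]
  simp only [add_re, ofReal_re, mul_re, I_re, mul_zero, ofReal_im, I_im, mul_one, sub_self,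
    add_zero, add_im, mul_im, zero_add]
  have hX : 1 ≤ c ^ 2 - 3 * s ^ 2 + 6 * c * s := by norm_num at *; nlinarith
  have hY : |c ^ 2 - 3 * s ^ 2 - 2 * c * s| ≤ 0.225 := by
    rw [abs_le]
    constructor <;> norm_num at * <;> nlinarith
  constructor
  · nlinarith
  · have h1 := sq_le_sq' (abs_le.1 hY).1 (abs_le.1 hY).2
    have h2 : (1 : ℝ) ≤ (c ^ 2 - 3 * s ^ 2 + 6 * c * s) ^ 2 := one_le_pow₀ hX
    have h3 : 0 ≤ r ^ 2 := sq_nonneg r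
    rw [div_pow, mul_pow, mul_pow, hs, neg_sq, div_pow, mul_pow]
    norm_num at *
    nlinarith [mul_le_mul_of_nonneg_left h1 h3, mul_le_mul_of_nonneg_left h2 h3]

theorem im_cm : ((2 + I * √2) / 6 : ℂ).im = √2 / 6 := by
  rw [show ((2 + I * √2) / 6 : ℂ) = ((1 / 3 : ℝ) : ℂ) + ((√2 / 6 : ℝ) : ℂ) * I by
    push_cast; ring]
  simp

theorem qc_cm : qc ((2 + I * √2) / 6) =
    (Real.exp (-(2 * Real.pi * (√2 / 6))) : ℝ) * ((-1 + √3 * I) / 2) := by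
  have h : Complex.exp (((Real.pi - Real.pi / 3 : ℝ) : ℂ) * I) = (-1 + √3 * I) / 2 := by
    rw [Complex.exp_mul_I, ← ofReal_cos, ← ofReal_sin, Real.cos_pi_sub, Real.sin_pi_sub,
      Real.cos_pi_div_three, Real.sin_pi_div_three]
    push_cast
    ring
  rw [← h, ofReal_exp, ← Complex.exp_add, qc]
  congr 1
  push_cast
  linear_combination (2 * Real.pi * √2 / 6 : ℂ) * I_sq

/-- At `(2 + i√2)/6` the Fricke and Atkin–Lehner involutions force `etaQuot ^ 2 = 64`, and the
product expansion selects the sign. -/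
theorem etaQuot_cm : etaQuot ((2 + I * √2) / 6) = -8 := by
  set α : ℂ := (2 + I * √2) / 6 with hα
  have h2 : (√2 : ℂ) ^ 2 = 2 := by
    rw [← ofReal_pow, Real.sq_sqrt (by norm_num)]
    norm_num
  have him : 0 < α.im := by rw [hα, im_cm]; positivity
  have h0 := ne_zero_of_im_pos him
  have hβ : -1 / (6 * α) = (-2 + I * √2) / 6 := by
    rw [div_eq_iff (by simpa using h0), hα]
    linear_combination (-1 / 6 * √2 ^ 2 : ℂ) * I_sq + (1 / 6 : ℂ) * h2
  have hβ' : (3 * (-1 / (6 * α)) + 1) / (6 * (-1 / (6 * α)) + 3) = α := by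
    have hne : (6 * (-1 / (6 * α)) + 3) ≠ 0 := by
      rw [hβ]
      intro h
      have := congrArg Complex.re h
      simp at this
      norm_num at this
    rw [div_eq_iff hne, hβ, hα]
    linear_combination (-1 / 6 * √2 ^ 2 : ℂ) * I_sq + (1 / 6 : ℂ) * h2
  have hβim : 0 < (-1 / (6 * α)).im :=
    im_neg_one_div_pos (im_nat_mul_pos him (n := 6) (by norm_num))
  have hinv : etaQuot α = 64 / etaQuot α := by
    conv_lhs => rw [← hβ', etaQuot_atkinLehner_three hβim, etaQuot_neg_one_div him]
  rw [eq_div_iff (etaQuot_ne_zero him)] at hinv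
  have hfac : (etaQuot α - 8) * (etaQuot α + 8) = 0 := by linear_combination hinv
  rcases mul_eq_zero.1 hfac with h | h
  swap
  · exact eq_neg_of_add_eq_zero_left h
  exfalso
  have hprod := etaQuot_mul_qc him
  have hq1 := norm_qc_lt_one him
  have hnorm : ‖qc α‖ ∈ Set.Icc (0.225 : ℝ) 0.229 := by
    rw [norm_qc, im_cm]
    exact exp_cm_bounds
  have hq3 : ‖qc α ^ 3‖ < 1 := by
    rw [norm_pow]
    exact pow_lt_one₀ (norm_nonneg _) hq1 (by norm_num)
  have hsplit : ∏' n : ℕ, (1 + qc α ^ (n + 1)) = (1 + qc α) * ∏' n : ℕ, (1 + qc α ^ (n + 2)) := by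
    have := tprod_eq_zero_mul' (f := fun n : ℕ ↦ 1 + qc α ^ (n + 1))
      (multipliable_one_add_of_summable (summable_norm_pow_add hq1 2))
    simpa using this
  have hR := norm_mul_pow_six_sub_one_le (norm_tprod_one_add_pow_sub_one_le hq1 2)
    (norm_tprod_one_add_pow_sub_one_le hq3 1) (by
      obtain ⟨hl, hu⟩ := hnorm
      rw [norm_pow, pow_one]
      generalize ‖qc α‖ = r at *
      have h2 : r ^ 2 ≤ 0.0525 := by norm_num at *; nlinarith
      have h3 : r ^ 3 ≤ 0.0121 := by norm_num at *; nlinarith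
      have e2 : r ^ 2 / (1 - r) ≤ 0.07 := by
        rw [div_le_iff₀ (by linarith)]; norm_num at *; nlinarith
      have e3 : r ^ 3 / (1 - r ^ 3) ≤ 0.015 := by
        rw [div_le_iff₀ (by norm_num at *; linarith)]; norm_num at *; nlinarith
      norm_num at *
      linarith)
  obtain ⟨hre, him'⟩ := mul_one_add_pow_six_bounds exp_cm_bounds qc_cm
  have hneg := re_mul_neg_of_norm_sub_one_le hre him' hR
  rw [hsplit, sub_eq_zero.1 h] at hprod
  have := congrArg Complex.re (show (qc α * (1 + qc α) ^ 6 * ((∏' n : ℕ, (1 + qc α ^ (n + 2))) *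
    ∏' n : ℕ, (1 + (qc α ^ 3) ^ (n + 1))) ^ 6) = ((1 / 8 : ℝ) : ℂ) by
      push_cast
      linear_combination hprod / 8)
  rw [ofReal_re] at this
  linarith

theorem jnStar_cm : jnStar 6 ((2 + I * √2) / 6) = -10 := by
  rw [jnStar_six, etaQuot_cm]
  norm_num

/-- Every integral matrix of Atkin–Lehner shape with the correct determinant gives an element of
the Fricke group. -/
theorem exists_mem_frickeGroup_six {e f : ℕ} (hef : e * f = 6) {x y z w : ℤ}
    (h : e * x * w - f * y * z = 1) :
    ∃ g ∈ FrickeGroup 6,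
      g.1 = (√(e : ℝ))⁻¹ • !![(x : ℝ) * e, (y : ℝ); (z : ℝ) * 6, (w : ℝ) * e] := by
  have he : 0 < e := Nat.pos_of_mul_pos_right (hef ▸ by norm_num : 0 < e * f)
  have heR : (0 : ℝ) < e := by exact_mod_cast he
  have hefR : (e : ℝ) * f = 6 := by exact_mod_cast hef
  have hR : (e : ℝ) * x * w - f * y * z = 1 := by exact_mod_cast h
  refine ⟨⟨(√(e : ℝ))⁻¹ • !![(x : ℝ) * e, (y : ℝ); (z : ℝ) * 6, (w : ℝ) * e], ?_⟩,
    Subgroup.subset_closure (Or.inr (Set.mem_biUnion (x := e) ?_ ⟨x, y, z, w, by simp⟩)), rfl⟩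
  · rw [det_smul, det_fin_two_of, Fintype.card_fin, inv_pow, Real.sq_sqrt heR.le]
    field_simp
    linear_combination e * hR + y * z * hefR
  · have hdvd : e ∈ Nat.divisors 6 := Nat.mem_divisors.2 ⟨⟨f, hef.symm⟩, by norm_num⟩
    have : ∀ e ∈ Nat.divisors 6, e ∣ 6 ∧ Nat.Coprime e (6 / e) := by decide
    exact this e hdvd

theorem transpose_smul_mul_mul_smul {e : ℝ} (he : 0 ≤ e) (N Q : Matrix (Fin 2) (Fin 2) ℝ) :
    ((√e)⁻¹ • N)ᵀ * Q * ((√e)⁻¹ • N) = e⁻¹ • (Nᵀ * Q * N) := by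
  rw [transpose_smul, smul_mul, smul_mul, Matrix.mul_smul, smul_smul, ← mul_inv,
    Real.mul_self_sqrt he]

theorem cmPointC_formMat {a β c : ℤ} (h : β ^ 2 + 2 = 6 * a * c) :
    cmPointC (formMat (6 * a) (2 * β) c) = (-β + I * √2) / (6 * a) := by
  have hdet : (formMat (6 * a) (2 * β) c).det = 2 := by
    have hR : (β : ℝ) ^ 2 + 2 = 6 * a * c := by exact_mod_cast h
    rw [formMat, det_fin_two_of]
    push_cast
    linear_combination -hR
  rw [cmPointC, hdet]
  simp [formMat]

theorem im_cmPointC_pos {a β c : ℤ} (ha : 0 < a) (h : β ^ 2 + 2 = 6 * a * c) :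
    0 < (cmPointC (formMat (6 * a) (2 * β) c)).im := by
  have haR : (0 : ℝ) < a := by exact_mod_cast ha
  rw [cmPointC_formMat h, show ((-β + I * √2) / (6 * a) : ℂ) =
    ((-β / (6 * a) : ℝ) : ℂ) + ((√2 / (6 * a) : ℝ) : ℂ) * I by push_cast; ring]
  rw [add_im, ofReal_im, im_ofReal_mul, I_im]
  positivity

theorem SL2R.val_mul (g h : SL2R) : (g * h).1 = g.1 * h.1 :=
  Matrix.SpecialLinearGroup.coe_mul g h

theorem SL2R.val_mul_val_inv (g : SL2R) : g.1 * (g⁻¹).1 = 1 := by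
  rw [← SL2R.val_mul, mul_inv_cancel]
  exact Matrix.SpecialLinearGroup.coe_one

/-- The form `Q` is equivalent to `[6, -4, 1]` and the hauptmodul takes the value `-10` at its
CM point. -/
def IsPrincipal (Q : Matrix (Fin 2) (Fin 2) ℝ) : Prop :=
  (∃ g ∈ FrickeGroup 6, Q = (g.1)ᵀ * formMat 6 (-4) 1 * g.1) ∧ jnStar 6 (cmPointC Q) = -10

theorem isPrincipal_iff {Q Q' : Matrix (Fin 2) (Fin 2) ℝ} {g : SL2R} (hg : g ∈ FrickeGroup 6)
    (hQ : Q' = (g.1)ᵀ * Q * g.1) (hj : jnStar 6 (cmPointC Q) = jnStar 6 (cmPointC Q')) :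
    IsPrincipal Q ↔ IsPrincipal Q' := by
  unfold IsPrincipal
  rw [hj]
  refine and_congr_left fun _ ↦ ⟨?_, ?_⟩
  · rintro ⟨k, hk, rfl⟩
    refine ⟨k * g, mul_mem hk hg, ?_⟩
    rw [hQ, SL2R.val_mul, transpose_mul]
    simp only [Matrix.mul_assoc]
  · rintro ⟨k, hk, hk'⟩
    refine ⟨k * g⁻¹, mul_mem hk (inv_mem hg), ?_⟩
    have hinv := SL2R.val_mul_val_inv g
    have hinv' : (g⁻¹).1ᵀ * g.1ᵀ = 1 := by rw [← transpose_mul, hinv, transpose_one]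
    rw [SL2R.val_mul, transpose_mul]
    calc Q = ((g⁻¹).1ᵀ * g.1ᵀ) * Q * (g.1 * (g⁻¹).1) := by
          rw [hinv, hinv', Matrix.one_mul, Matrix.mul_one]
      _ = (g⁻¹).1ᵀ * (g.1ᵀ * Q * g.1) * (g⁻¹).1 := by simp only [Matrix.mul_assoc]
      _ = _ := by rw [← hQ, hk']; simp only [Matrix.mul_assoc]

theorem etaQuot_sub_int (z : ℂ) (k : ℤ) : etaQuot (z - k) = etaQuot z := by
  have : Function.Periodic etaQuot 1 := etaQuot_add_one
  simpa using this.sub_int_mul_eq (x := z) k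

theorem isPrincipal_translate {a β c : ℤ} (ha : 0 < a) (h : β ^ 2 + 2 = 6 * a * c) (k : ℤ) :
    IsPrincipal (formMat (6 * a) (2 * β) c) ↔
      IsPrincipal (formMat (6 * a) (2 * (β + 6 * a * k)) (6 * a * k ^ 2 + 2 * β * k + c)) := by
  obtain ⟨g, hg, hg'⟩ := exists_mem_frickeGroup_six (e := 1) (f := 6) (by norm_num)
    (x := 1) (y := k) (z := 0) (w := 1) (by simp)
  refine isPrincipal_iff hg ?_ ?_
  · rw [hg', transpose_smul_mul_mul_smul (by positivity)]
    ext i j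
    fin_cases i <;> fin_cases j <;> simp [formMat, Matrix.mul_apply, Fin.sum_univ_two] <;> ring
  · have haC : (a : ℂ) ≠ 0 := by exact_mod_cast ha.ne'
    rw [cmPointC_formMat h, cmPointC_formMat (by linear_combination h), jnStar_six,
      jnStar_six, ← etaQuot_sub_int _ k]
    congr! 3 <;> push_cast <;> field_simp <;> ring

theorem isPrincipal_fricke {a β c : ℤ} (ha : 0 < a) (hc : 0 < c) (h : β ^ 2 + 2 = 6 * a * c) :
    IsPrincipal (formMat (6 * a) (2 * β) c) ↔ IsPrincipal (formMat (6 * c) (2 * -β) a) := by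
  have h' : (-β) ^ 2 + 2 = 6 * c * a := by linear_combination h
  obtain ⟨g, hg, hg'⟩ := exists_mem_frickeGroup_six (e := 6) (f := 1) (by norm_num)
    (x := 0) (y := -1) (z := 1) (w := 0) (by simp)
  refine isPrincipal_iff hg ?_ ?_
  · rw [hg', transpose_smul_mul_mul_smul (by positivity)]
    ext i j
    fin_cases i <;> fin_cases j <;> simp [formMat, Matrix.mul_apply, Fin.sum_univ_two] <;> ring
  · have haC : (a : ℂ) ≠ 0 := by exact_mod_cast ha.ne'
    have hcC : (c : ℂ) ≠ 0 := by exact_mod_cast hc.ne'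
    have him := im_cmPointC_pos ha h
    have h0 := ne_zero_of_im_pos him
    have hα : cmPointC (formMat (6 * c) (2 * -β) a) =
        -1 / (6 * cmPointC (formMat (6 * a) (2 * β) c)) := by
      have h2 : (√2 : ℂ) ^ 2 = 2 := by
        rw [← ofReal_pow, Real.sq_sqrt (by norm_num)]
        norm_num
      have hC : (β : ℂ) ^ 2 + 2 = 6 * a * c := by exact_mod_cast h
      rw [eq_div_iff (by simpa using h0), cmPointC_formMat h, cmPointC_formMat h']
      push_cast
      field_simp
      linear_combination (√2 ^ 2 : ℂ) * I_sq - h2 - hC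
    have ht := etaQuot_ne_zero him
    rw [hα, jnStar_six, jnStar_six, etaQuot_neg_one_div him]
    field_simp
    ring

theorem isPrincipal_atkinLehner_three {a β c : ℤ} (ha : 0 < a) (h : β ^ 2 + 2 = 6 * a * c)
    (ha' : 0 < 3 * a + 2 * β + 2 * c) :
    IsPrincipal (formMat (6 * a) (2 * β) c) ↔
      IsPrincipal (formMat (6 * (3 * a + 2 * β + 2 * c)) (2 * (5 * β + 6 * (a + c)))
        (2 * a + 2 * β + 3 * c)) := by
  have h' : (5 * β + 6 * (a + c)) ^ 2 + 2 =
      6 * (3 * a + 2 * β + 2 * c) * (2 * a + 2 * β + 3 * c) := by linear_combination h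
  obtain ⟨g, hg, hg'⟩ := exists_mem_frickeGroup_six (e := 3) (f := 2) (by norm_num)
    (x := 1) (y := 1) (z := 1) (w := 1) (by simp)
  refine isPrincipal_iff hg ?_ ?_
  · rw [hg', transpose_smul_mul_mul_smul (by positivity)]
    ext i j
    fin_cases i <;> fin_cases j <;> simp [formMat, Matrix.mul_apply, Fin.sum_univ_two] <;> ring
  · have haC : (a : ℂ) ≠ 0 := by exact_mod_cast ha.ne'
    have haC' : (3 * a + 2 * β + 2 * c : ℂ) ≠ 0 := by exact_mod_cast ha'.ne'
    have him := im_cmPointC_pos ha' h'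
    have hne := two_mul_add_one_ne_zero him
    have hα : cmPointC (formMat (6 * a) (2 * β) c) =
        (3 * cmPointC (formMat (6 * (3 * a + 2 * β + 2 * c)) (2 * (5 * β + 6 * (a + c)))
          (2 * a + 2 * β + 3 * c)) + 1) /
        (6 * cmPointC (formMat (6 * (3 * a + 2 * β + 2 * c)) (2 * (5 * β + 6 * (a + c)))
          (2 * a + 2 * β + 3 * c)) + 3) := by
      have h2 : (√2 : ℂ) ^ 2 = 2 := by
        rw [← ofReal_pow, Real.sq_sqrt (by norm_num)]
        norm_num
      have hC : (β : ℂ) ^ 2 + 2 = 6 * a * c := by exact_mod_cast h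
      rw [eq_div_iff (fun H ↦ hne (by linear_combination H / 3)), cmPointC_formMat h,
        cmPointC_formMat h']
      push_cast
      generalize hm : (3 * a + 2 * β + 2 * c : ℂ) = m at haC'
      field_simp
      rw [← hm]
      linear_combination (√2 ^ 2 : ℂ) * I_sq - h2 - hC
    rw [hα, jnStar_six, jnStar_six, etaQuot_atkinLehner_three him]

/-- Reduction theory: every form of discriminant `-8` in `𝒬_{8,6}` is principal. -/
theorem isPrincipal_formMat (n : ℕ) : ∀ a β c : ℤ, 0 < a → a ≤ n → β ^ 2 + 2 = 6 * a * c →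
    IsPrincipal (formMat (6 * a) (2 * β) c) := by
  induction n with
  | zero => intro a β c ha han; push_cast at han; omega
  | succ n ih =>
    intro a β c ha han h
    obtain ⟨k, hk⟩ : ∃ k : ℤ, |β + 6 * a * k| ≤ 3 * a := by
      refine ⟨-((β + 3 * a) / (6 * a)), ?_⟩
      have h1 := Int.emod_add_mul_ediv (β + 3 * a) (6 * a)
      have h2 := Int.emod_nonneg (β + 3 * a) (show 6 * a ≠ 0 by omega)
      have h3 := Int.emod_lt_of_pos (β + 3 * a) (show 0 < 6 * a by omega)
      rw [abs_le]
      constructor <;> linarith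
    rw [isPrincipal_translate ha h k]
    replace h : (β + 6 * a * k) ^ 2 + 2 = 6 * a * (6 * a * k ^ 2 + 2 * β * k + c) := by
      linear_combination h
    generalize β + 6 * a * k = b at *
    generalize 6 * a * k ^ 2 + 2 * β * k + c = d at *
    have hd : 0 < d := by
      by_contra! hd
      nlinarith [mul_nonneg ha.le (neg_nonneg.2 hd), sq_nonneg b]
    by_cases hda : d < a
    · rw [isPrincipal_fricke ha hd h]
      exact ih d (-b) a hd (by push_cast at han; omega) (by linear_combination h)
    by_cases hp : 3 * a + 2 * b + 2 * d < a
    · have hpos : 0 < 3 * a + 2 * b + 2 * d := by nlinarith [sq_nonneg (3 * a + b)]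
      rw [isPrincipal_atkinLehner_three ha h hpos]
      exact ih _ _ _ hpos (by push_cast at han; omega) (by linear_combination h)
    by_cases hm : 3 * a - 2 * b + 2 * d < a
    · have hpos : 0 < 3 * a - 2 * b + 2 * d := by nlinarith [sq_nonneg (3 * a - b)]
      have heq : (5 * b - 6 * (a + d)) ^ 2 + 2 =
        6 * (3 * a - 2 * b + 2 * d) * (2 * a - 2 * b + 3 * d) := by linear_combination h
      have := (isPrincipal_atkinLehner_three hpos heq (by linarith)).1
        (ih _ _ _ hpos (by push_cast at han; omega) heq)
      convert this using 2 <;> ring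
    obtain ⟨hb1, hb2⟩ := abs_le.1 hk
    have ha1 : a = 1 := by
      by_contra ha1
      have ha2 : 2 ≤ a := by omega
      rcases le_total b 0 with hb | hb
      · rcases le_total (-b) (2 * a) with hb' | hb' <;> nlinarith
      · rcases le_total b (2 * a) with hb' | hb' <;> nlinarith
    subst ha1
    have hprin : IsPrincipal (formMat (6 * 1) (2 * -2) 1) := by
      refine ⟨⟨1, one_mem _, by simp⟩, ?_⟩
      rw [cmPointC_formMat (by norm_num), ← jnStar_cm]
      norm_num
    have hb : b = -2 ∧ d = 1 ∨ b = 2 ∧ d = 1 := by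
      have : -3 ≤ b := by linarith
      have : b ≤ 3 := by linarith
      interval_cases b <;> omega
    rcases hb with ⟨rfl, rfl⟩ | ⟨rfl, rfl⟩
    · exact hprin
    · rw [isPrincipal_fricke one_pos one_pos (by norm_num)]
      exact hprin

theorem isPrincipal_of_mem_QdN {Q : Matrix (Fin 2) (Fin 2) ℝ} (hQ : Q ∈ QdN 8 6) :
    IsPrincipal Q := by
  obtain ⟨a, b, c, rfl, ha, hd, a, rfl⟩ := hQ
  obtain ⟨β, rfl⟩ : (2 : ℤ) ∣ b :=
    Int.prime_two.dvd_of_dvd_pow (n := 2) ⟨2 * ((6 : ℕ) * a) * c - 4, by linear_combination hd⟩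
  push_cast at *
  exact isPrincipal_formMat a.toNat a β c (by linarith) (Int.self_le_toNat a)
    (by linarith)

theorem exists_mul_eq_of_mul_eq_six {e f e' f' : ℕ} (h : e * f = 6) (h' : e' * f' = 6) :
    ∃ g e₁ e₂ k : ℕ, e = g * e₁ ∧ e' = g * e₂ ∧ e₁ * e₂ * (g * k) = 6 := by
  have key : ∀ e ∈ Nat.divisors 6, ∀ e' ∈ Nat.divisors 6,
      e = e.gcd e' * (e / e.gcd e') ∧ e' = e.gcd e' * (e' / e.gcd e') ∧
        e / e.gcd e' * (e' / e.gcd e') * (e.gcd e' * (6 / e.lcm e')) = 6 := by decide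
  exact ⟨_, _, _, _, key e (Nat.mem_divisors.2 ⟨⟨f, h.symm⟩, by norm_num⟩) e'
    (Nat.mem_divisors.2 ⟨⟨f', h'.symm⟩, by norm_num⟩)⟩

/-- Every element of the Fricke group of level `6` is an Atkin–Lehner matrix. -/
theorem exists_eq_of_mem_frickeGroup_six {g : SL2R} (hg : g ∈ FrickeGroup 6) :
    ∃ e f : ℕ, e * f = 6 ∧ ∃ x y z w : ℤ,
      g.1 = (√(e : ℝ))⁻¹ • !![(x : ℝ) * e, (y : ℝ); (z : ℝ) * 6, (w : ℝ) * e] := by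
  induction hg using Subgroup.closure_induction with
  | mem g hg =>
    rcases hg with ⟨γ, hγ, rfl⟩ | hg
    · obtain ⟨z, hz⟩ := (ZMod.intCast_zmod_eq_zero_iff_dvd _ 6).1
        (CongruenceSubgroup.Gamma0_mem.1 hγ)
      refine ⟨1, 6, rfl, γ.1 0 0, γ.1 0 1, z, γ.1 1 1, ?_⟩
      have hz' : ((γ.1 1 0 : ℤ) : ℝ) = z * 6 := by
        have : γ.1 1 0 = 6 * z := hz
        rw [this]
        push_cast
        ring
      ext i j
      fin_cases i <;> fin_cases j <;> simp
      exact hz'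
    · obtain ⟨e, ⟨⟨f, hf⟩, -⟩, x, y, z, w, hg⟩ := Set.mem_iUnion₂.1 hg
      exact ⟨e, f, hf.symm, x, y, z, w, by simpa using hg⟩
  | one => exact ⟨1, 6, rfl, 1, 0, 0, 1, by ext i j; fin_cases i <;> fin_cases j <;> simp⟩
  | mul g h _ _ ihg ihh =>
    obtain ⟨e, f, hef, x, y, z, w, hg⟩ := ihg
    obtain ⟨e', f', hef', x', y', z', w', hh⟩ := ihh
    obtain ⟨d, e₁, e₂, k, rfl, rfl, h6⟩ := exists_mul_eq_of_mul_eq_six hef hef'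
    have h6R : (e₁ : ℝ) * e₂ * (d * k) = 6 := by exact_mod_cast h6
    have hd : (d : ℝ) ≠ 0 := by rintro hd; simp [hd] at h6R
    have hsqrt : (√((d * e₁ : ℕ) : ℝ))⁻¹ * (√((d * e₂ : ℕ) : ℝ))⁻¹ =
        (√((e₁ * e₂ : ℕ) : ℝ))⁻¹ * (d : ℝ)⁻¹ := by
      rw [← mul_inv, ← mul_inv, ← Real.sqrt_mul (Nat.cast_nonneg _)]
      congr 1
      rw [show (((d * e₁ : ℕ) : ℝ) * ((d * e₂ : ℕ) : ℝ)) = ((e₁ * e₂ : ℕ) : ℝ) * (d : ℝ) ^ 2 by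
        push_cast; ring, Real.sqrt_mul (Nat.cast_nonneg _), Real.sqrt_sq (Nat.cast_nonneg _)]
    refine ⟨e₁ * e₂, d * k, h6, d * x * x' + k * y * z', e₁ * x * y' + e₂ * y * w',
      e₂ * z * x' + e₁ * w * z', k * z * y' + d * w * w', ?_⟩
    rw [SL2R.val_mul, hg, hh, smul_mul, Matrix.mul_smul, smul_smul, hsqrt, mul_smul]
    congr 1
    ext i j
    fin_cases i <;> fin_cases j <;>
      simp only [Matrix.smul_apply, Matrix.mul_apply, Fin.sum_univ_two, smul_eq_mul] <;>
      simp <;> field_simp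
    · linear_combination -y * z' * h6R
    · linear_combination -z * y' * h6R
  | inv g _ ih =>
    obtain ⟨e, f, hef, x, y, z, w, hg⟩ := ih
    refine ⟨e, f, hef, w, -y, -z, x, ?_⟩
    have : (g⁻¹).1 = g.1.adjugate := Matrix.SpecialLinearGroup.coe_inv g
    rw [this, hg, adjugate_fin_two]
    ext i j
    fin_cases i <;> fin_cases j <;> simp

theorem stabilizer_equations {g : SL2R} (hg : (g.1)ᵀ * formMat 6 (-4) 1 * g.1 = formMat 6 (-4) 1) :
    g.1 1 0 = -6 * g.1 0 1 ∧ g.1 0 0 - g.1 1 1 = -4 * g.1 0 1 := by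
  have hdet : g.1 0 0 * g.1 1 1 - g.1 0 1 * g.1 1 0 = 1 := by
    rw [← det_fin_two]
    exact g.2
  have h00 := congrFun (congrFun hg 0) 0
  have h01 := congrFun (congrFun hg 0) 1
  have h11 := congrFun (congrFun hg 1) 1
  simp only [formMat, Matrix.mul_apply, Fin.sum_univ_two, transpose_apply] at h00 h01 h11
  simp at h00 h01 h11
  generalize g.1 0 0 = p at *
  generalize g.1 0 1 = q at *
  generalize g.1 1 0 = r at *
  generalize g.1 1 1 = s at *
  exact ⟨by linear_combination (-q) * h00 + p * h01 - (-2 * p + r) * hdet,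
    by linear_combination q * h01 - p * h11 + (-2 * q + s) * hdet⟩

theorem frickeGroup_stabilizer_ncard :
    {g : SL2R | g ∈ FrickeGroup 6 ∧ (g.1)ᵀ * formMat 6 (-4) 1 * g.1 = formMat 6 (-4) 1}.ncard =
      4 := by
  obtain ⟨W, hW, hW'⟩ := exists_mem_frickeGroup_six (e := 2) (f := 3) (by norm_num)
    (x := 1) (y := -1) (z := 1) (w := -1) (by simp)
  obtain ⟨N, hN, hN'⟩ := exists_mem_frickeGroup_six (e := 1) (f := 6) (by norm_num)
    (x := -1) (y := 0) (z := 0) (w := -1) (by simp)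
  obtain ⟨V, hV, hV'⟩ := exists_mem_frickeGroup_six (e := 2) (f := 3) (by norm_num)
    (x := -1) (y := 1) (z := -1) (w := 1) (by simp)
  have heq : {g : SL2R | g ∈ FrickeGroup 6 ∧ (g.1)ᵀ * formMat 6 (-4) 1 * g.1 = formMat 6 (-4) 1}
      = {1, N, W, V} := by
    ext g
    simp only [Set.mem_ofPred_eq, Set.mem_insert_iff, Set.mem_singleton_iff]
    constructor
    · rintro ⟨hg, hQ⟩
      obtain ⟨e, f, hef, x, y, z, w, hgm⟩ := exists_eq_of_mem_frickeGroup_six hg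
      obtain ⟨h1, h2⟩ := stabilizer_equations hQ
      have he : e ∈ Nat.divisors 6 := Nat.mem_divisors.2 ⟨⟨f, hef.symm⟩, by norm_num⟩
      have hpos : (0 : ℝ) < e := by exact_mod_cast Nat.pos_of_mem_divisors he
      have hsq : (√(e : ℝ)) ≠ 0 := (Real.sqrt_pos.2 hpos).ne'
      have hdet : (x : ℝ) * e * (w * e) - y * (z * 6) = e := by
        have := g.2
        rw [hgm, det_smul, det_fin_two_of, Fintype.card_fin, inv_pow, Real.sq_sqrt hpos.le] at this
        field_simp at this
        linear_combination this
      rw [hgm] at h1 h2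
      simp at h1 h2
      field_simp at h1 h2
      norm_cast at h1 h2 hdet
      subst h1
      have hsum : (e * (x + w)) ^ 2 = 4 * (e : ℤ) - 8 * y ^ 2 := by
        linear_combination (e * (x - w) - y * 4) * h2 + 4 * hdet
      have he6 : (e : ℤ) ≤ 6 := by exact_mod_cast Nat.divisor_le he
      have hy1 : -1 ≤ y := by nlinarith [sq_nonneg (e * (x + w))]
      have hy2 : y ≤ 1 := by nlinarith [sq_nonneg (e * (x + w))]
      have he' : e = 1 ∨ e = 2 ∨ e = 3 ∨ e = 6 := by
        have : Nat.divisors 6 = {1, 2, 3, 6} := by decide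
        simpa [this] using he
      have hs1 : -2 ≤ x + w := by
        rcases he' with rfl | rfl | rfl | rfl <;> push_cast at * <;> nlinarith
      have hs2 : x + w ≤ 2 := by
        rcases he' with rfl | rfl | rfl | rfl <;> push_cast at * <;> nlinarith
      have hcases : (e = 1 ∧ y = 0 ∧ x = 1 ∧ w = 1) ∨ (e = 1 ∧ y = 0 ∧ x = -1 ∧ w = -1) ∨
          (e = 2 ∧ y = -1 ∧ x = 1 ∧ w = -1) ∨ (e = 2 ∧ y = 1 ∧ x = -1 ∧ w = 1) := by
        generalize hs : x + w = s at *
        rcases he' with rfl | rfl | rfl | rfl <;> interval_cases y <;> interval_cases s <;> omega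
      rcases hcases with ⟨rfl, rfl, rfl, rfl⟩ | ⟨rfl, rfl, rfl, rfl⟩ | ⟨rfl, rfl, rfl, rfl⟩ |
        ⟨rfl, rfl, rfl, rfl⟩
      · left
        refine Subtype.ext (hgm.trans ?_)
        ext i j
        fin_cases i <;> fin_cases j <;> simp
      · exact Or.inr (Or.inl (Subtype.ext (hgm.trans hN'.symm)))
      · exact Or.inr (Or.inr (Or.inl (Subtype.ext (hgm.trans hW'.symm))))
      · exact Or.inr (Or.inr (Or.inr (Subtype.ext (hgm.trans hV'.symm))))
    · rintro (rfl | rfl | rfl | rfl)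
      · exact ⟨one_mem _, by simp⟩
      · refine ⟨hN, ?_⟩
        rw [hN', transpose_smul_mul_mul_smul (by positivity)]
        ext i j
        fin_cases i <;> fin_cases j <;> simp [formMat, Matrix.mul_apply, Fin.sum_univ_two]
      · refine ⟨hW, ?_⟩
        rw [hW', transpose_smul_mul_mul_smul (by positivity)]
        ext i j
        fin_cases i <;> fin_cases j <;> simp [formMat, Matrix.mul_apply, Fin.sum_univ_two] <;>
          norm_num
      · refine ⟨hV, ?_⟩
        rw [hV', transpose_smul_mul_mul_smul (by positivity)]
        ext i j
        fin_cases i <;> fin_cases j <;> simp [formMat, Matrix.mul_apply, Fin.sum_univ_two] <;>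
          norm_num
  have h1 : (1 : SL2R).1 0 0 = 1 := rfl
  have hN0 : N.1 0 0 = -1 := by simp [hN']
  have h2 : (√2)⁻¹ * 2 = √(2 : ℝ) := by rw [inv_mul_eq_div, Real.div_sqrt]
  have hW0 : W.1 0 0 = √2 := by simp [hW', h2]
  have hV0 : V.1 0 0 = -√2 := by simp [hV', h2]
  have hlt : 1 < √(2 : ℝ) := Real.lt_sqrt_of_sq_lt (by norm_num)
  have hne {g h : SL2R} (H : g.1 0 0 ≠ h.1 0 0) : g ≠ h := fun h ↦ H (by rw [h])
  rw [heq, Set.ncard_insert_of_notMem, Set.ncard_insert_of_notMem, Set.ncard_pair]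
  · exact hne (by rw [hW0, hV0]; linarith)
  · simp only [Set.mem_insert_iff, Set.mem_singleton_iff, not_or]
    exact ⟨hne (by rw [hN0, hW0]; linarith), hne (by rw [hN0, hV0]; linarith)⟩
  · simp only [Set.mem_insert_iff, Set.mem_singleton_iff, not_or]
    exact ⟨hne (by rw [h1, hN0]; norm_num), hne (by rw [h1, hW0]; linarith),
      hne (by rw [h1, hV0]; linarith)⟩

theorem stabOrder_formMat : stabOrder (FrickeGroup 6) (formMat 6 (-4) 1) = 2 := by
  have h : Nat.card {g : SL2R // g ∈ FrickeGroup 6 ∧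
      (g.1)ᵀ * formMat 6 (-4) 1 * g.1 = formMat 6 (-4) 1} = 4 := frickeGroup_stabilizer_ncard
  rw [stabOrder, h]

theorem stabOrder_transform (Γ : Subgroup SL2R) (M : Matrix (Fin 2) (Fin 2) ℝ) {g : SL2R}
    (hg : g ∈ Γ) : stabOrder Γ ((g.1)ᵀ * M * g.1) = stabOrder Γ M := by
  have hinv := SL2R.val_mul_val_inv g
  have hinv' : (g⁻¹).1ᵀ * g.1ᵀ = 1 := by rw [← transpose_mul, hinv, transpose_one]
  have hinv₂ : (g⁻¹).1 * g.1 = 1 := by simpa using SL2R.val_mul_val_inv g⁻¹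
  have hinv₂' : g.1ᵀ * (g⁻¹).1ᵀ = 1 := by rw [← transpose_mul, hinv₂, transpose_one]
  unfold stabOrder
  congr 1
  refine Nat.card_congr ((MulAut.conj g).toEquiv.subtypeEquiv fun h ↦ ?_)
  refine and_congr ?_ ?_
  · simp only [MulEquiv.toEquiv_eq_coe, MulEquiv.coe_toEquiv, MulAut.conj_apply]
    rw [Subgroup.mul_mem_cancel_right _ (inv_mem hg), Subgroup.mul_mem_cancel_left _ hg]
  · have hconj : ((MulAut.conj g) h).1 = g.1 * h.1 * (g⁻¹).1 := rfl
    simp only [MulEquiv.toEquiv_eq_coe, MulEquiv.coe_toEquiv]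
    rw [hconj, transpose_mul, transpose_mul]
    constructor
    · intro H
      calc _ = (g⁻¹).1ᵀ * (h.1ᵀ * (g.1ᵀ * M * g.1) * h.1) * (g⁻¹).1 := by
            simp only [Matrix.mul_assoc]
        _ = ((g⁻¹).1ᵀ * g.1ᵀ) * M * (g.1 * (g⁻¹).1) := by
            rw [H]
            simp only [Matrix.mul_assoc]
        _ = M := by rw [hinv, hinv', Matrix.one_mul, Matrix.mul_one]
    · intro H
      calc _ = (g.1ᵀ * (g⁻¹).1ᵀ) * (h.1ᵀ * (g.1ᵀ * M * g.1) * h.1) * ((g⁻¹).1 * g.1) := by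
            rw [hinv₂, hinv₂', Matrix.one_mul, Matrix.mul_one]
        _ = g.1ᵀ * ((g⁻¹).1ᵀ * (h.1ᵀ * g.1ᵀ) * M * (g.1 * h.1 * (g⁻¹).1)) * g.1 := by
            simp only [Matrix.mul_assoc]
        _ = g.1ᵀ * M * g.1 := by rw [H]

theorem formMat_mem_QdN : formMat 6 (-4) 1 ∈ QdN 8 6 :=
  ⟨6, -4, 1, rfl, by norm_num, by norm_num, by norm_num⟩

theorem t2Star_six_eight : t2Star 6 (Polynomial.X ^ 2 - Polynomial.C 158) 8 = -29 := by
  rw [t2Star, if_pos (by norm_num), classTrace]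
  have hsub : ∀ O : Quot (formRel (FrickeGroup 6) (QdN 8 6)),
      O = Quot.mk _ ⟨formMat 6 (-4) 1, formMat_mem_QdN⟩ := by
    rintro ⟨Q, hQ⟩
    exact (Quot.sound (isPrincipal_of_mem_QdN hQ).1).symm
  rw [finsum_eq_single _ (Quot.mk _ ⟨formMat 6 (-4) 1, formMat_mem_QdN⟩)
    fun O hO ↦ absurd (hsub O) hO]
  generalize Quot.out (Quot.mk (formRel (FrickeGroup 6) (QdN 8 6))
    ⟨formMat 6 (-4) 1, formMat_mem_QdN⟩) = Q
  obtain ⟨⟨g, hg, hQg⟩, hj⟩ := isPrincipal_of_mem_QdN Q.2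
  rw [hj, hQg, stabOrder_transform _ _ hg, stabOrder_formMat]
  norm_num

/-- **CM value at level 6.** `j₆*((2 + i√2)/6) = -10`; moreover `(2 + i√2)/6` is the CM point
of `Q = [6,-4,1]` of discriminant `-8`, whose class `𝒬_{8,6}/Γ₀*(6)` is a single orbit with
`|Γ̄₀*(6)_Q| = 2`, and with `φ₂(j₆*) = (j₆*)² - 158` one gets
`t₂^{(6*)}(8) = ((-10)² - 158)/2 = -29`. -/
theorem cm_value_level_six :
    jnStar 6 ((2 + Complex.I * Real.sqrt 2) / 6) = -10 ∧
    cmPointC (formMat 6 (-4) 1) = (2 + Complex.I * Real.sqrt 2) / 6 ∧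
    formMat 6 (-4) 1 ∈ QdN 8 6 ∧
    (∀ Q ∈ QdN 8 6, ∃ g ∈ FrickeGroup 6, Q = (g.1)ᵀ * formMat 6 (-4) 1 * g.1) ∧
    stabOrder (FrickeGroup 6) (formMat 6 (-4) 1) = 2 ∧
    t2Star 6 (Polynomial.X ^ 2 - Polynomial.C 158) 8 = -29 := by
  refine ⟨jnStar_cm, ?_, formMat_mem_QdN, fun Q hQ ↦ (isPrincipal_of_mem_QdN hQ).1,
    stabOrder_formMat, t2Star_six_eight⟩
  have h := cmPointC_formMat (a := 1) (β := -2) (c := 1) (by norm_num)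
  norm_num at h
  exact h
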